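/- Let 𝕜 be a field of characteristic zero, V a finite-dimensional 𝕜-vector space, and ν a nondegenerate alternating bilinear form on V. Let P be the space of all linear maps T : V → End(V) such that T(x)y = T(y)x for all x, y ∈ V and T(x) ∈ 𝔰𝔭(ν) for every x ∈ V (the first prolongation of 𝔰𝔭(ν)). Then the map T ↦ c, where c(x,y,z) := ν(T(x)y, z), is a linear isomorphism from P onto the space of totally symmetric trilinear forms on V. (That is, 𝔰𝔭(ν)^{(1)} ≅ ⊙³V*.) -/

import Mathlib

/-- The first prolongation `𝔰𝔭(ν)^{(1)}` of `𝔰𝔭(ν) ⊆ End(V)`: linear maps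
`T : V → End(V)` with `T(x)y = T(y)x` and `T(x) ∈ 𝔰𝔭(ν)` for all `x`. -/
def prolongSp (𝕜 : Type*) [Field 𝕜] (V : Type*) [AddCommGroup V] [Module 𝕜 V]
    (ν : V →ₗ[𝕜] V →ₗ[𝕜] 𝕜) : Submodule 𝕜 (V →ₗ[𝕜] Module.End 𝕜 V) where
  carrier := {T | (∀ x y, T x y = T y x) ∧ ∀ x u v, ν (T x u) v + ν u (T x v) = 0}
  zero_mem' := by simp
  add_mem' := by
    rintro T T' ⟨h1, h2⟩ ⟨h1', h2'⟩
    refine ⟨fun x y => ?_, fun x u v => ?_⟩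
    · simp [h1 x y, h1' x y]
    · simp only [LinearMap.add_apply, map_add]
      linear_combination h2 x u v + h2' x u v
  smul_mem' := by
    rintro c T ⟨h1, h2⟩
    refine ⟨fun x y => ?_, fun x u v => ?_⟩
    · simp [h1 x y]
    · simp only [LinearMap.smul_apply, map_smul, smul_eq_mul]
      linear_combination c * h2 x u v

/-- The space of totally symmetric trilinear forms `⊙³V*` on `V`. -/
def symTrilinear (𝕜 : Type*) [Field 𝕜] (V : Type*) [AddCommGroup V] [Module 𝕜 V] :
    Submodule 𝕜 (V →ₗ[𝕜] V →ₗ[𝕜] V →ₗ[𝕜] 𝕜) where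
  carrier := {c | (∀ x y z, c x y z = c y x z) ∧ ∀ x y z, c x y z = c x z y}
  zero_mem' := by simp
  add_mem' := by
    rintro c c' ⟨h1, h2⟩ ⟨h1', h2'⟩
    exact ⟨fun x y z => by simp [h1 x y z, h1' x y z],
           fun x y z => by simp [h2 x y z, h2' x y z]⟩
  smul_mem' := by
    rintro a c ⟨h1, h2⟩
    exact ⟨fun x y z => by simp [h1 x y z], fun x y z => by simp [h2 x y z]⟩

/-!
For a skew-symmetric form `ν`, an endomorphism `A` lies in `𝔰𝔭(ν)` exactly when the bilinear form
`ν(A u, v)` is symmetric. So, for `c(x, y, z) = ν(T(x)y, z)`, the condition `T(x) ∈ 𝔰𝔭(ν)` is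
symmetry of `c` in its last two arguments, while `T(x)y = T(y)x` is symmetry in its first two,
because `ν` separates vectors. Since `ν : V → V*` is an isomorphism, every trilinear form is such
a `c` for exactly one bilinear `T`.
-/

theorem apply_add_apply_eq_zero_iff_of_skew {R M N : Type*} [CommSemiring R] [AddCommMonoid M]
    [Module R M] [AddCommGroup N] [Module R N] {ν : M →ₗ[R] M →ₗ[R] N}
    (hskew : ∀ x y, -ν x y = ν y x) (A : M → M) (u v : M) :
    ν (A u) v + ν u (A v) = 0 ↔ ν (A u) v = ν (A v) u := by
  rw [← hskew (A v) u, add_neg_eq_zero]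

section Field

variable {𝕜 V : Type*} [Field 𝕜] [AddCommGroup V] [Module 𝕜 V] {ν : V →ₗ[𝕜] V →ₗ[𝕜] 𝕜}

theorem compr₂_mem_symTrilinear_iff (hskew : ∀ x y, -ν x y = ν y x)
    (hinj : Function.Injective ν) (T : V →ₗ[𝕜] V →ₗ[𝕜] V) :
    T.compr₂ ν ∈ symTrilinear 𝕜 V ↔ T ∈ prolongSp 𝕜 V ν := by
  have symm_first : (∀ x y z, ν (T x y) z = ν (T y x) z) ↔ ∀ x y, T x y = T y x := by
    simp only [← LinearMap.ext_iff, hinj.eq_iff]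
  have symm_last : (∀ x y z, ν (T x y) z = ν (T x z) y) ↔
      ∀ x u v, ν (T x u) v + ν u (T x v) = 0 := by
    simp only [apply_add_apply_eq_zero_iff_of_skew hskew]
  exact and_congr symm_first symm_last

theorem stmt_7_general [FiniteDimensional 𝕜 V] (hskew : ∀ x y, -ν x y = ν y x)
    (hν : ν.SeparatingLeft) :
    ∃ e : prolongSp 𝕜 V ν ≃ₗ[𝕜] symTrilinear 𝕜 V,
      ∀ (T : prolongSp 𝕜 V ν) (x y z : V),
        (e T : V →ₗ[𝕜] V →ₗ[𝕜] V →ₗ[𝕜] 𝕜) x y z = ν ((T : V →ₗ[𝕜] Module.End 𝕜 V) x y) z := by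
  have hinj : Function.Injective ν :=
    LinearMap.ker_eq_bot.mp (LinearMap.separatingLeft_iff_ker_eq_bot.mp hν)
  let toDual : V ≃ₗ[𝕜] Module.Dual 𝕜 V :=
    .ofInjectiveOfFinrankEq ν hinj Subspace.dual_finrank_eq.symm
  let lowerIndex : (V →ₗ[𝕜] V →ₗ[𝕜] V) ≃ₗ[𝕜] (V →ₗ[𝕜] V →ₗ[𝕜] V →ₗ[𝕜] 𝕜) :=
    toDual.congrRight.congrRight
  have comap_lowerIndex :
      (symTrilinear 𝕜 V).comap (lowerIndex : _ →ₗ[𝕜] _) = prolongSp 𝕜 V ν :=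
    Submodule.ext (compr₂_mem_symTrilinear_iff hskew hinj)
  exact ⟨.trans (.ofEq _ _ comap_lowerIndex.symm) (lowerIndex.ofSubmodule' _),
    fun _ _ _ _ ↦ rfl⟩

end Field

/-- For a nondegenerate alternating bilinear form `ν` on a finite-dimensional
vector space `V` over a field of characteristic zero, the map `T ↦ c` with
`c(x,y,z) = ν(T(x)y, z)` is a linear isomorphism from the first prolongation
`𝔰𝔭(ν)^{(1)}` onto the space of totally symmetric trilinear forms on `V`:
`𝔰𝔭(ν)^{(1)} ≅ ⊙³V*`. -/
theorem stmt_7 (𝕜 : Type*) [Field 𝕜] [CharZero 𝕜]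
    (V : Type*) [AddCommGroup V] [Module 𝕜 V] [FiniteDimensional 𝕜 V]
    (ν : V →ₗ[𝕜] V →ₗ[𝕜] 𝕜)
    (halt : ∀ x, ν x x = 0)
    (hnd : ∀ x, (∀ y, ν x y = 0) → x = 0) :
    ∃ e : prolongSp 𝕜 V ν ≃ₗ[𝕜] symTrilinear 𝕜 V,
      ∀ (T : prolongSp 𝕜 V ν) (x y z : V),
        (↑(e T) : V →ₗ[𝕜] V →ₗ[𝕜] V →ₗ[𝕜] 𝕜) x y z =
          ν ((↑T : V →ₗ[𝕜] Module.End 𝕜 V) x y) z :=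
  stmt_7_general (LinearMap.IsAlt.neg halt) hnd
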